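/- For every 2×2 complex unitary matrix U there exist unique real numbers α₀, α₁, α₂, α₃ with α₀, α₂ ∈ [0, 2π), α₁ ∈ [0, π/2), α₃ ∈ [0, π), and α₁ = 0 whenever α₀ − α₂ is an integer multiple of π, such that U = B(α₁) · diag(e^{iα₀}, e^{iα₂}) · B(α₃). (This is the existence and uniqueness of the left-hand-side parameters in the Euler equation (E2) of the LOpp-calculus: any element of U(2) is a beam splitter, followed by a phase on each wire, followed by a beam splitter.) -/

import Mathlib

open Complex Real

noncomputable def bsMat (θ : ℝ) : Matrix (Fin 2) (Fin 2) ℂ :=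
  !![(Real.cos θ : ℂ), Complex.I * Real.sin θ;
     Complex.I * Real.sin θ, (Real.cos θ : ℂ)]

theorem bsMat_mul (x y : ℝ) : bsMat x * bsMat y = bsMat (x + y) := by
  ext i j
  fin_cases i <;> fin_cases j <;>
    simp [bsMat, Matrix.mul_apply, Fin.sum_univ_two, Complex.cos_add, Complex.sin_add] <;>
    ring_nf <;> simp [Complex.I_sq] <;> ring

theorem bsMat_zero : bsMat 0 = 1 := by
  ext i j
  fin_cases i <;> fin_cases j <;> simp [bsMat]

theorem bsMat_star (x : ℝ) : star (bsMat x) = bsMat (-x) := by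
  ext i j
  fin_cases i <;> fin_cases j <;>
    simp [bsMat, Matrix.star_apply, ← Complex.ofReal_cos, ← Complex.ofReal_sin, -Complex.ofReal_cos, -Complex.ofReal_sin]

theorem bsMat_mem (x : ℝ) : bsMat x ∈ Matrix.unitaryGroup (Fin 2) ℂ := by
  rw [Matrix.mem_unitaryGroup_iff, bsMat_star, bsMat_mul, add_neg_cancel, bsMat_zero]

def dg (p q : ℂ) : Matrix (Fin 2) (Fin 2) ℂ := !![p, 0; 0, q]

/-- angle for a point on the circle -/
theorem exists_angle (x y : ℝ) (h : x ^ 2 + y ^ 2 = 1) :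
    ∃ t : ℝ, Real.cos t = x ∧ Real.sin t = y := by
  have hn : ‖(⟨x, y⟩ : ℂ)‖ = 1 := by
    rw [Complex.norm_def, Complex.normSq_mk, Real.sqrt_eq_one]; linarith
  have h0 : (⟨x, y⟩ : ℂ) ≠ 0 := by
    intro h; rw [h] at hn; simp at hn
  refine ⟨Complex.arg ⟨x, y⟩, ?_, ?_⟩
  · rw [Complex.cos_arg h0, hn]; simp
  · rw [Complex.sin_arg, hn]; simp

theorem row_lemma (v w : ℂ) (h1 : v.re ^ 2 + v.im ^ 2 + (w.re ^ 2 + w.im ^ 2) = 1)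
    (h2 : v.re * w.im = v.im * w.re) :
    ∃ (p : ℂ) (t : ℝ), p.re ^ 2 + p.im ^ 2 = 1 ∧ v = p * Real.cos t ∧ w = p * Real.sin t := by
  by_cases hv : v = 0
  · refine ⟨w, π / 2, ?_, ?_, ?_⟩
    · simpa [hv] using h1
    · simp [hv]
    · simp
  · obtain ⟨n, hn0, hn⟩ : ∃ n : ℝ, 0 < n ∧ n ^ 2 = v.re ^ 2 + v.im ^ 2 :=
      ⟨‖v‖, by simpa using hv, by rw [Complex.sq_norm, Complex.normSq_apply]; ring⟩
    obtain ⟨t, ht1, ht2⟩ := exists_angle n ((v.re * w.re + v.im * w.im) / n) (by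
      field_simp
      have : n ^ 2 + (w.re ^ 2 + w.im ^ 2) = 1 := by rw [hn]; exact h1
      have e : (v.re * w.re + v.im * w.im) ^ 2 = n ^ 2 * (w.re ^ 2 + w.im ^ 2) := by
        rw [hn]; linear_combination (-(v.re * w.im) + v.im * w.re) * h2
      rw [e]; linear_combination n ^ 2 * this)
    refine ⟨v / n, t, ?_, ?_, ?_⟩
    · simp only [Complex.div_ofReal_re, Complex.div_ofReal_im]
      field_simp; linarith
    · rw [ht1]; field_simp [hn0.ne']
    · rw [ht2]
      apply Complex.ext
      · simp only [Complex.mul_re, Complex.div_ofReal_re, Complex.div_ofReal_im, Complex.ofReal_re, Complex.ofReal_im]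
        field_simp
        linear_combination w.re * hn - v.im * h2
      · simp only [Complex.mul_im, Complex.div_ofReal_re, Complex.div_ofReal_im, Complex.ofReal_re, Complex.ofReal_im]
        field_simp
        linear_combination w.im * hn + v.re * h2

theorem diag_lemma (V : Matrix (Fin 2) (Fin 2) ℂ) (hV : V ∈ Matrix.unitaryGroup (Fin 2) ℂ)
    (h : (V 0 0).re * (V 0 1).re + (V 0 0).im * (V 0 1).im = 0) :
    ∃ (p q : ℂ) (t : ℝ), p.re ^ 2 + p.im ^ 2 = 1 ∧ q.re ^ 2 + q.im ^ 2 = 1 ∧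
      V = dg p q * bsMat t := by
  have hV' := hV
  rw [Matrix.mem_unitaryGroup_iff] at hV
  have h00 := congrFun₂ hV 0 0
  have h10 := congrFun₂ hV 1 0
  have h11 := congrFun₂ hV 1 1
  simp only [Matrix.mul_apply, Fin.sum_univ_two, Matrix.star_apply, Matrix.one_apply_eq] at h00 h10 h11
  obtain ⟨p, t, hp, e0, e1⟩ := row_lemma (V 0 0) (-I * V 0 1) (by
    have := congrArg Complex.re h00
    simp at this ⊢
    linarith) (by simp; linarith)
  have e1' : V 0 1 = p * (I * Real.sin t) := by
    linear_combination I * e1 + V 0 1 * I_sq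
  have hcs : (Real.cos t : ℂ) ^ 2 + (Real.sin t : ℂ) ^ 2 = 1 := by
    exact_mod_cast Real.cos_sq_add_sin_sq t
  have hpp : p * star p = 1 := by
    apply Complex.ext <;> simp <;> nlinarith
  have ho : V 1 0 * Real.cos t = I * Real.sin t * V 1 1 := by
    have : (V 1 0 * Real.cos t - I * Real.sin t * V 1 1) * star p = 0 := by
      rw [e0, e1'] at h10
      simp only [star_mul', Complex.star_def, Complex.conj_I, Complex.conj_ofReal] at h10 ⊢
      rw [Matrix.one_apply_ne (by decide)] at h10
      linear_combination h10
    rcases mul_eq_zero.1 this with h | h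
    · exact sub_eq_zero.1 h
    · rw [h] at hpp; simp at hpp
  set q := Real.cos t * V 1 1 - I * Real.sin t * V 1 0 with hq
  have f1 : V 1 1 = q * Real.cos t := by
    rw [hq]; linear_combination (-V 1 1) * hcs + I * Real.sin t * ho + V 1 1 * Real.sin t ^ 2 * I_sq
  have f0 : V 1 0 = q * (I * Real.sin t) := by
    rw [hq]; linear_combination (-V 1 0) * hcs + Real.cos t * ho + V 1 0 * Real.sin t ^ 2 * I_sq
  refine ⟨p, q, t, hp, ?_, ?_⟩
  · rw [f0, f1] at h11
    have := congrArg Complex.re h11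
    have hc := Real.cos_sq_add_sin_sq t
    generalize Real.cos t = c at *
    generalize Real.sin t = s at *
    generalize q = q' at *
    simp at this
    linear_combination this - (q'.re ^ 2 + q'.im ^ 2) * hc
  · ext i j
    fin_cases i <;> fin_cases j <;> simp only [dg, bsMat, Matrix.mul_apply, Fin.sum_univ_two] <;> simp
    · simpa using e0
    · simpa using e1'
    · simpa using f0
    · simpa using f1


theorem exists_theta (P Q : ℝ) : ∃ t ∈ Set.Ico 0 (π / 2), Real.cos (2 * t) * P + Real.sin (2 * t) * Q = 0 := by
  have : ∃ s : ℝ, Real.cos s * P + Real.sin s * Q = 0 := by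
    by_cases h : (⟨Q, -P⟩ : ℂ) = 0
    · have h1 := congrArg Complex.re h
      have h2 := congrArg Complex.im h
      simp at h1 h2
      exact ⟨0, by simp [h1, h2]⟩
    · refine ⟨Complex.arg ⟨Q, -P⟩, ?_⟩
      rw [Complex.cos_arg h, Complex.sin_arg]; simp; ring
  obtain ⟨s, hs⟩ := this
  have hm := toIcoMod_mem_Ico Real.pi_pos 0 s
  have he : toIcoMod Real.pi_pos 0 s = s - (toIcoDiv Real.pi_pos 0 s : ℤ) * π := by
    rw [toIcoMod]; simp
  refine ⟨toIcoMod Real.pi_pos 0 s / 2, ⟨by linarith [hm.1], by linarith [hm.2]⟩, ?_⟩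
  rw [show 2 * (toIcoMod Real.pi_pos 0 s / 2) = toIcoMod Real.pi_pos 0 s by ring, he,
    Real.cos_sub_int_mul_pi, Real.sin_sub_int_mul_pi]
  linear_combination ((-1) ^ (toIcoDiv Real.pi_pos 0 s)) * hs

theorem exists1 (U : Matrix (Fin 2) (Fin 2) ℂ) (hU : U ∈ Matrix.unitaryGroup (Fin 2) ℂ) :
    ∃ (p q : ℂ) (a t : ℝ), a ∈ Set.Ico 0 (π / 2) ∧
      p.re ^ 2 + p.im ^ 2 = 1 ∧ q.re ^ 2 + q.im ^ 2 = 1 ∧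
      U = bsMat a * dg p q * bsMat t := by
  obtain ⟨a, ha, h⟩ := exists_theta ((U 0 0).re * (U 0 1).re + (U 0 0).im * (U 0 1).im)
    (((U 0 0).re * (U 1 1).im - (U 0 0).im * (U 1 1).re
      + ((U 1 0).im * (U 0 1).re - (U 1 0).re * (U 0 1).im)) / 2)
  obtain ⟨p, q, t, hp, hq, e⟩ := diag_lemma (bsMat (-a) * U) (mul_mem (bsMat_mem _) hU) (by
    rw [Matrix.mem_unitaryGroup_iff'] at hU
    have h01 := congrArg Complex.re (congrFun₂ hU 0 1)
    simp [Matrix.mul_apply, Fin.sum_univ_two, Matrix.star_apply] at h01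
    rw [Real.cos_two_mul, Real.sin_two_mul] at h
    have hc := Real.cos_sq_add_sin_sq a
    simp only [bsMat, Matrix.mul_apply, Fin.sum_univ_two, Real.cos_neg, Real.sin_neg]
    generalize Real.cos a = c at *
    generalize Real.sin a = s at *
    simp
    linear_combination h + s ^ 2 * h01 + (-((U 0 0).re * (U 0 1).re + (U 0 0).im * (U 0 1).im)) * hc)
  refine ⟨p, q, a, t, ha, hp, hq, ?_⟩
  rw [mul_assoc, ← e, ← mul_assoc, bsMat_mul, add_neg_cancel, bsMat_zero, one_mul]

theorem exists2 (U : Matrix (Fin 2) (Fin 2) ℂ) (hU : U ∈ Matrix.unitaryGroup (Fin 2) ℂ) :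
    ∃ (p q : ℂ) (a t : ℝ), a ∈ Set.Ico 0 (π / 2) ∧
      p.re ^ 2 + p.im ^ 2 = 1 ∧ q.re ^ 2 + q.im ^ 2 = 1 ∧ ((p = q ∨ p = -q) → a = 0) ∧
      U = bsMat a * dg p q * bsMat t := by
  obtain ⟨p, q, a, t, ha, hp, hq, e⟩ := exists1 U hU
  have h0 : (0 : ℝ) ∈ Set.Ico 0 (π / 2) := ⟨le_rfl, by positivity⟩
  by_cases h1 : p = q
  · refine ⟨p, q, 0, a + t, h0, hp, hq, fun _ => rfl, ?_⟩
    rw [e, bsMat_zero, one_mul, ← bsMat_mul, ← mul_assoc]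
    congr 1
    ext i j
    fin_cases i <;> fin_cases j <;> simp [dg, bsMat, Matrix.mul_apply, Fin.sum_univ_two, h1, mul_comm]
  by_cases h2 : p = -q
  · refine ⟨p, q, 0, -a + t, h0, hp, hq, fun _ => rfl, ?_⟩
    rw [e, bsMat_zero, one_mul, ← bsMat_mul, ← mul_assoc]
    congr 1
    ext i j
    fin_cases i <;> fin_cases j <;> simp [dg, bsMat, Matrix.mul_apply, Fin.sum_univ_two, h2, mul_comm]
  exact ⟨p, q, a, t, ha, hp, hq, fun h => by tauto, e⟩

theorem exists3 (U : Matrix (Fin 2) (Fin 2) ℂ) (hU : U ∈ Matrix.unitaryGroup (Fin 2) ℂ) :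
    ∃ (p q : ℂ) (a t : ℝ), a ∈ Set.Ico 0 (π / 2) ∧ t ∈ Set.Ico 0 π ∧
      p.re ^ 2 + p.im ^ 2 = 1 ∧ q.re ^ 2 + q.im ^ 2 = 1 ∧ ((p = q ∨ p = -q) → a = 0) ∧
      U = bsMat a * dg p q * bsMat t := by
  obtain ⟨p, q, a, t, ha, hp, hq, h, e⟩ := exists2 U hU
  have hm := toIcoMod_mem_Ico Real.pi_pos 0 t
  have he : toIcoMod Real.pi_pos 0 t = t - (toIcoDiv Real.pi_pos 0 t : ℤ) * π := by
    rw [toIcoMod]; simp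
  rw [zero_add] at hm
  rw [he] at hm
  generalize toIcoDiv Real.pi_pos 0 t = n at hm
  rcases Int.even_or_odd n with hn | hn
  · refine ⟨p, q, a, _, ha, hm, hp, hq, h, ?_⟩
    have : bsMat (t - n * π) = bsMat t := by
      simp only [bsMat, Real.cos_sub_int_mul_pi, Real.sin_sub_int_mul_pi, hn.neg_one_zpow, one_mul]
    rw [this, e]
  · refine ⟨-p, -q, a, _, ha, hm, by simpa using hp, by simpa using hq,
      fun h' => h (by simpa [neg_eq_iff_eq_neg] using h'), ?_⟩
    have : bsMat (t - n * π) = - bsMat t := by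
      simp only [bsMat, Real.cos_sub_int_mul_pi, Real.sin_sub_int_mul_pi, hn.neg_one_zpow]
      ext i j
      fin_cases i <;> fin_cases j <;> simp
    have h3 : dg (-p) (-q) = - dg p q := by
      ext i j
      fin_cases i <;> fin_cases j <;> simp [dg]
    rw [this, e, h3]; simp

theorem exists_exp (p : ℂ) (hp : p.re ^ 2 + p.im ^ 2 = 1) :
    ∃ x ∈ Set.Ico 0 (2 * π), Complex.exp (I * x) = p := by
  obtain ⟨t, h1, h2⟩ := exists_angle _ _ hp
  have hm := toIcoMod_mem_Ico Real.two_pi_pos 0 t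
  have he : toIcoMod Real.two_pi_pos 0 t = t - (toIcoDiv Real.two_pi_pos 0 t : ℤ) * (2 * π) := by
    rw [toIcoMod]; simp
  rw [zero_add] at hm
  refine ⟨_, hm, ?_⟩
  rw [mul_comm, Complex.exp_mul_I, ← Complex.ofReal_cos, ← Complex.ofReal_sin, he,
    Real.cos_sub_int_mul_two_pi, Real.sin_sub_int_mul_two_pi, h1, h2]
  exact Complex.re_add_im p

theorem exp_inj {x y : ℝ} (hx : x ∈ Set.Ico 0 (2 * π)) (hy : y ∈ Set.Ico 0 (2 * π))
    (h : Complex.exp (I * x) = Complex.exp (I * y)) : x = y := by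
  rw [Complex.exp_eq_exp_iff_exists_int] at h
  obtain ⟨n, hn⟩ := h
  have h1 := congrArg Complex.im hn
  simp at h1
  have hp := Real.pi_pos
  have n1 : (n : ℝ) < 1 := by
    by_contra hc; push Not at hc
    nlinarith [hx.1, hx.2, hy.1, hy.2]
  have n2 : (-1 : ℝ) < n := by
    by_contra hc; push Not at hc
    nlinarith [hx.1, hx.2, hy.1, hy.2]
  have : n = 0 := by
    have a1 : n < 1 := by exact_mod_cast n1
    have a2 : -1 < n := by exact_mod_cast n2
    omega
  subst this; simpa using h1

theorem exp_pm {x y : ℝ} : (∃ m : ℤ, x - y = m * π) ↔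
    (Complex.exp (I * x) = Complex.exp (I * y) ∨ Complex.exp (I * x) = -Complex.exp (I * y)) := by
  rw [← sq_eq_sq_iff_eq_or_eq_neg, ← Complex.exp_nat_mul, ← Complex.exp_nat_mul,
    Complex.exp_eq_exp_iff_exists_int]
  refine exists_congr fun m => ⟨fun h => ?_, fun h => ?_⟩
  · have : (x : ℂ) - y = m * π := by exact_mod_cast h
    push_cast
    linear_combination 2 * I * this
  · have := congrArg Complex.im h
    simp at this
    linarith

theorem diag_eq (x y : ℂ) : Matrix.diagonal (fun i : Fin 2 => if i = 0 then x else y) = dg x y := by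
  ext i j
  fin_cases i <;> fin_cases j <;> simp [dg]

theorem uniq_core (p q p' q' : ℂ) (a t a' t' : ℝ) (hp : p ≠ 0) (hq : q ≠ 0)
    (ha : a ∈ Set.Ico 0 (π / 2)) (ha' : a' ∈ Set.Ico 0 (π / 2))
    (ht : t ∈ Set.Ico 0 π) (ht' : t' ∈ Set.Ico 0 π)
    (hp' : p' ≠ 0) (hq' : q' ≠ 0)
    (h : (p = q ∨ p = -q) → a = 0) (h' : (p' = q' ∨ p' = -q') → a' = 0)
    (e : bsMat a * dg p q * bsMat t = bsMat a' * dg p' q' * bsMat t') :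
    a = a' ∧ t = t' ∧ p = p' ∧ q = q' := by
  have e2 : bsMat (a - a') * dg p q = dg p' q' * bsMat (t' - t) := by
    have := congrArg (fun M => bsMat (-a') * M * bsMat (-t)) e
    simp only [mul_assoc, bsMat_mul] at this
    simp only [← mul_assoc, bsMat_mul] at this
    simpa [bsMat_zero, sub_eq_add_neg, add_comm] using this
  have hx : 0 < Real.cos (a - a') := Real.cos_pos_of_mem_Ioo
    ⟨by linarith [ha.1, ha'.2], by linarith [ha.2, ha'.1]⟩
  have hsx : Real.sin (a - a') = 0 → a = a' := fun hh => by
    have := (Real.sin_eq_zero_iff_of_lt_of_lt (by linarith [ha.1, ha'.2, Real.pi_pos])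
      (by linarith [ha.2, ha'.1, Real.pi_pos])).1 hh
    linarith
  have hsy : Real.sin (t' - t) = 0 → t' - t = 0 := fun hh =>
    (Real.sin_eq_zero_iff_of_lt_of_lt (by linarith [ht.2, ht'.1])
      (by linarith [ht.1, ht'.2])).1 hh
  have g00 := congrFun₂ e2 0 0
  have g01 := congrFun₂ e2 0 1
  have g10 := congrFun₂ e2 1 0
  have g11 := congrFun₂ e2 1 1
  simp only [bsMat, dg, Matrix.mul_apply, Fin.sum_univ_two] at g00 g01 g10 g11
  have hcx := Real.cos_sq_add_sin_sq (a - a')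
  have hcy := Real.cos_sq_add_sin_sq (t' - t)
  have key : Real.sin (a - a') = 0 := by
    by_contra hs
    have hs' : (Real.sin (a - a') : ℂ) ≠ 0 := by exact_mod_cast hs
    have hc' : (Real.cos (a - a') : ℂ) ≠ 0 := by exact_mod_cast hx.ne'
    have hcx' : (Real.cos (a - a') : ℂ) ^ 2 + (Real.sin (a - a') : ℂ) ^ 2 = 1 := by exact_mod_cast hcx
    have hcy' : (Real.cos (t' - t) : ℂ) ^ 2 + (Real.sin (t' - t) : ℂ) ^ 2 = 1 := by exact_mod_cast hcy
    suffices hsuf : a = a' by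
      apply hs; rw [hsuf]; simp
    clear hsx
    generalize Real.cos (a - a') = c at *
    generalize Real.cos (t' - t) = d at *
    generalize Real.sin (a - a') = s at *
    generalize Real.sin (t' - t) = r at *
    simp at g00 g01 g10 g11
    have k01 : (s : ℂ) * q = p' * r := by
      apply mul_left_cancel₀ I_ne_zero; linear_combination g01
    have k10 : (s : ℂ) * p = q' * r := by
      apply mul_left_cancel₀ I_ne_zero; linear_combination g10
    have hd : (d : ℂ) ≠ 0 := by
      intro hd; rw [hd] at g00; simp [hp] at g00; exact hx.ne' g00
    have hr : (r : ℂ) ≠ 0 := by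
      intro hr; rw [hr] at k01; simp [hq] at k01; exact hs k01
    have z1 : a = 0 := h <| sq_eq_sq_iff_eq_or_eq_neg.1 <| by
      apply mul_left_cancel₀ (mul_ne_zero (mul_ne_zero hc' hr) (mul_ne_zero hs' hd))
      linear_combination (r * s * d * p) * g00 + p' * d * r * d * k10
        - q' * d * r * d * k01 - (r * s * d * q) * g11
    have z2 : a' = 0 := h' <| sq_eq_sq_iff_eq_or_eq_neg.1 <| by
      apply mul_left_cancel₀ (mul_ne_zero hr hd)
      linear_combination (-(s * q)) * g00 - p' * d * k01 + (s * p) * g11 + q' * d * k10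
    rw [z1, z2]
  have hA := hsx key
  have hy : Real.sin (t' - t) = 0 := by
    rw [key] at g01
    simpa [hp', -Complex.ofReal_sin, -Complex.ofReal_sub] using g01
  have hT := hsy hy
  rw [hT, hA] at g00 g11
  simp at g00 g11
  exact ⟨hA, by linarith, g00, g11⟩

theorem E2_lhs_exists_unique (U : Matrix.unitaryGroup (Fin 2) ℂ) :
    ∃! α : ℝ × ℝ × ℝ × ℝ,
      α.1 ∈ Set.Ico 0 (2 * π) ∧
      α.2.1 ∈ Set.Ico 0 (π / 2) ∧
      α.2.2.1 ∈ Set.Ico 0 (2 * π) ∧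
      α.2.2.2 ∈ Set.Ico 0 π ∧
      ((∃ m : ℤ, α.1 - α.2.2.1 = m * π) → α.2.1 = 0) ∧
      (U : Matrix (Fin 2) (Fin 2) ℂ) =
        bsMat α.2.1 *
          Matrix.diagonal (fun i => if i = 0 then Complex.exp (Complex.I * α.1)
            else Complex.exp (Complex.I * α.2.2.1)) *
          bsMat α.2.2.2 := by
  simp only [exp_pm, diag_eq]
  obtain ⟨p, q, a, t, ha, ht, hp, hq, h, e⟩ := exists3 U U.2
  obtain ⟨x, hx, rfl⟩ := exists_exp p hp
  obtain ⟨y, hy, rfl⟩ := exists_exp q hq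
  refine ⟨(x, a, y, t), ⟨hx, ha, hy, ht, h, e⟩, ?_⟩
  rintro ⟨x', a', y', t'⟩ ⟨hx', ha', hy', ht', h', e'⟩
  obtain ⟨r1, r2, r3, r4⟩ := uniq_core _ _ _ _ _ _ _ _ (Complex.exp_ne_zero _)
    (Complex.exp_ne_zero _) ha' ha ht' ht (Complex.exp_ne_zero _) (Complex.exp_ne_zero _)
    h' h (e'.symm.trans e)
  have r3' := exp_inj hx' hx r3
  have r4' := exp_inj hy' hy r4
  simp only at r1 r2 r3' r4'
  rw [r1, r2, r3', r4']
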